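/- Let M be a compact metric space, f : M → M continuous, and φ : M → ℝ continuous. Suppose there is a real number c such that ∫ φ dμ = c for every f-invariant Borel probability measure μ. Then the Birkhoff averages (1/n) ∑_{i=0}^{n-1} φ(fⁱ(x)) converge to c uniformly in x ∈ M as n → ∞. -/

import Mathlib

open MeasureTheory

/-- If every `f`-invariant Borel probability measure on a compact metric space
assigns the same integral `c` to the continuous function `φ`, then the
Birkhoff averages of `φ` converge to `c` uniformly in `x`. -/
theorem stmt6 {M : Type*} [MetricSpace M] [CompactSpace M]
    [MeasurableSpace M] [BorelSpace M]
    (f : M → M) (hf : Continuous f) (φ : M → ℝ) (hφ : Continuous φ) (c : ℝ)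
    (hint : ∀ μ : Measure M, IsProbabilityMeasure μ →
      MeasurePreserving f μ μ → (∫ x, φ x ∂μ) = c) :
    ∀ ε : ℝ, 0 < ε → ∃ N : ℕ, ∀ n ≥ N, 1 ≤ n → ∀ x : M,
      |(1 / (n : ℝ)) * ∑ i ∈ Finset.range n, φ (f^[i] x) - c| < ε := by
  intro ε hε
  by_contra! hcon
  choose n hnN hn1 x hx using hcon
  have hprob : ∀ k, IsProbabilityMeasure
      ((ENNReal.ofReal (1 / (n k : ℝ))) • ∑ i ∈ Finset.range (n k), Measure.dirac (f^[i] (x k))) := by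
    intro k
    have hpos : (0 : ℝ) < n k := by exact_mod_cast hn1 k
    constructor
    simp only [Measure.smul_apply, Measure.finsetSum_apply, measure_univ, Finset.sum_const,
      Finset.card_range, smul_eq_mul, nsmul_eq_mul, mul_one]
    rw [← ENNReal.ofReal_natCast, ← ENNReal.ofReal_mul (by positivity)]
    rw [one_div, inv_mul_cancel₀ hpos.ne', ENNReal.ofReal_one]
  let ν : ℕ → ProbabilityMeasure M := fun k => ⟨_, hprob k⟩
  have hν : ∀ k (g : BoundedContinuousFunction M ℝ), ∫ y, g y ∂(ν k : Measure M) =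
      (1 / (n k : ℝ)) * ∑ i ∈ Finset.range (n k), g (f^[i] (x k)) := by
    intro k g
    change ∫ y, g y ∂((ENNReal.ofReal (1 / (n k : ℝ))) •
      ∑ i ∈ Finset.range (n k), Measure.dirac (f^[i] (x k))) = _
    rw [integral_smul_measure, integral_finsetSum_measure (fun i _ => g.integrable _)]
    simp only [integral_dirac, smul_eq_mul]
    rw [ENNReal.toReal_ofReal (by positivity)]
  let U : Ultrafilter ℕ := Filter.hyperfilter ℕ
  have hU : (U : Filter ℕ) ≤ Filter.atTop := by
    rw [← Nat.cofinite_eq_atTop]; exact Filter.hyperfilter_le_cofinite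
  obtain ⟨μ, -, hμ⟩ := (isCompact_univ (X := ProbabilityMeasure M)).ultrafilter_le_nhds
    (U.map ν) (by simp)
  have hT : Filter.Tendsto ν U (nhds μ) := hμ
  rw [ProbabilityMeasure.tendsto_iff_forall_integral_tendsto] at hT
  have hinv : MeasurePreserving f (μ : Measure M) (μ : Measure M) := by
    refine ⟨hf.measurable, ?_⟩
    have : IsProbabilityMeasure (Measure.map f (μ : Measure M)) :=
      Measure.isProbabilityMeasure_map hf.aemeasurable
    refine ext_of_forall_integral_eq_of_IsFiniteMeasure (fun g => ?_)
    rw [integral_map hf.aemeasurable g.continuous.aestronglyMeasurable]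
    have h1 := hT (g.compContinuous ⟨f, hf⟩)
    have h2 := hT g
    have h3 := h1.sub h2
    have h4 : Filter.Tendsto (fun k => ∫ y, (g.compContinuous ⟨f, hf⟩) y ∂(ν k : Measure M)
        - ∫ y, g y ∂(ν k : Measure M)) U (nhds 0) := by
      refine Filter.Tendsto.mono_left ?_ hU
      have hnt : Filter.Tendsto (fun k => (2 * ‖g‖) / (n k : ℝ)) Filter.atTop (nhds 0) :=
        Filter.Tendsto.const_div_atTop (tendsto_natCast_atTop_atTop.comp
          (Filter.tendsto_atTop_mono hnN Filter.tendsto_id)) _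
      refine squeeze_zero_norm (fun k => ?_) hnt
      rw [hν, hν, ← mul_sub, ← Finset.sum_sub_distrib]
      have e : ∑ i ∈ Finset.range (n k), ((g.compContinuous ⟨f, hf⟩) (f^[i] (x k))
          - g (f^[i] (x k))) = g (f^[n k] (x k)) - g (x k) := by
        have := Finset.sum_range_sub (fun i => g (f^[i] (x k))) (n k)
        simpa [Function.iterate_succ_apply'] using this
      rw [e, norm_mul, Real.norm_of_nonneg (by positivity), one_div, div_eq_inv_mul]
      gcongr
      calc _ ≤ ‖g (f^[n k] (x k))‖ + ‖g (x k)‖ := norm_sub_le _ _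
        _ ≤ ‖g‖ + ‖g‖ := add_le_add (g.norm_coe_le_norm _) (g.norm_coe_le_norm _)
        _ = _ := by ring
    have := tendsto_nhds_unique h3 h4
    exact sub_eq_zero.mp this
  have hc := hint μ inferInstance hinv
  have hφT := hT (BoundedContinuousFunction.mkOfCompact ⟨φ, hφ⟩)
  simp only [hν] at hφT
  simp only [BoundedContinuousFunction.mkOfCompact_apply, ContinuousMap.coe_mk, hc] at hφT
  have h5 := (hφT.sub_const c).abs
  have := ge_of_tendsto' h5 hx
  simp at this
  linarith
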